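/- (Inclusion–exclusion for small dual cones.) Let n = dim V. For every face A∨ of the dual arrangement H∨ and every x ∈ V: 1_{V(A∨)}(x) = Σ_{B∨} (−1)^{n − dim B∨} · 1_{U(B∨)}(x), the sum (with values in ℤ) ranging over the finitely many faces B∨ of H∨ with A∨ ≤ B∨, where 1_S denotes the indicator function of a set S and dim B∨ is the dimension of the linear span of B∨. -/

import Mathlib

/-! Basic notions for a (central, essential) arrangement of hyperplanes `H`
in a finite-dimensional real vector space, its faces, flats, the dual
arrangement and its faces, and the big/small dual cones. -/

/-- Two points `x`, `y` lie in the same face of the hyperplane arrangement `H`: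
for every hyperplane `W ∈ H` and every linear functional `f` with kernel `W`,
either `f x · f y > 0` or `f x = f y = 0`. -/
def SameFace {V : Type*} [AddCommGroup V] [Module ℝ V]
    (H : Finset (Submodule ℝ V)) (x y : V) : Prop :=
  ∀ W ∈ H, ∀ f : V →ₗ[ℝ] ℝ, LinearMap.ker f = W →
    (0 < f x * f y ∨ (f x = 0 ∧ f y = 0))

/-- A face of the arrangement `H`: an equivalence class of the relation `SameFace`. -/
def IsFace {V : Type*} [AddCommGroup V] [Module ℝ V]
    (H : Finset (Submodule ℝ V)) (A : Set V) : Prop :=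
  ∃ x : V, A = {y | SameFace H x y}

/-- A chamber is an open face. -/
def IsChamber {V : Type*} [AddCommGroup V] [Module ℝ V] [TopologicalSpace V]
    (H : Finset (Submodule ℝ V)) (A : Set V) : Prop :=
  IsFace H A ∧ IsOpen A

/-- A flat of `H`: an intersection of a subfamily of the hyperplanes
(the empty subfamily gives all of `V`). -/
def IsFlat {V : Type*} [AddCommGroup V] [Module ℝ V]
    (H : Finset (Submodule ℝ V)) (L : Submodule ℝ V) : Prop :=
  ∃ J : Finset (Submodule ℝ V), J ⊆ H ∧ L = J.inf id

/-- Two (continuous) linear functionals `f`, `g` lie in the same face of the dual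
arrangement `H∨`: for every 1-dimensional flat `l` of `H` and every `x ∈ l`,
either `f x · g x > 0` or `f x = g x = 0`. -/
def DualSameFace {V : Type*} [NormedAddCommGroup V] [NormedSpace ℝ V]
    (H : Finset (Submodule ℝ V)) (f g : V →L[ℝ] ℝ) : Prop :=
  ∀ l : Submodule ℝ V, IsFlat H l → Module.finrank ℝ l = 1 →
    ∀ x ∈ l, (0 < f x * g x ∨ (f x = 0 ∧ g x = 0))

/-- A face of the dual arrangement `H∨` in the dual space. -/
def IsDualFace {V : Type*} [NormedAddCommGroup V] [NormedSpace ℝ V]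
    (H : Finset (Submodule ℝ V)) (A : Set (V →L[ℝ] ℝ)) : Prop :=
  ∃ f : V →L[ℝ] ℝ, A = {g | DualSameFace H f g}

/-- A chamber of the dual arrangement: an open dual face. -/
def IsDualChamber {V : Type*} [NormedAddCommGroup V] [NormedSpace ℝ V]
    (H : Finset (Submodule ℝ V)) (A : Set (V →L[ℝ] ℝ)) : Prop :=
  IsDualFace H A ∧ IsOpen A

/-- The big dual cone `U(A∨)` of a dual face `A∨`. -/
def bigCone {V : Type*} [NormedAddCommGroup V] [NormedSpace ℝ V]
    (A : Set (V →L[ℝ] ℝ)) : Set V :=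
  {x | ∀ f ∈ A, 0 ≤ f x}

/-- The small dual cone `V(A∨)` of a dual face `A∨`: the intersection of the big
dual cones of all dual chambers `B∨` with `A∨ ≤ B∨`. -/
def smallCone {V : Type*} [NormedAddCommGroup V] [NormedSpace ℝ V]
    (H : Finset (Submodule ℝ V)) (A : Set (V →L[ℝ] ℝ)) : Set V :=
  ⋂ B ∈ {B : Set (V →L[ℝ] ℝ) | IsDualChamber H B ∧ A ⊆ closure B}, bigCone B

/-! Write `χ(C) = (-1) ^ dim (span C)` for a nonempty convex set `C` that is open in its linear
span, and `χ(∅) = 0`. Cutting such a set by a hyperplane `ℓ = 0` either does nothing or produces two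
pieces of the same dimension and one of dimension one less, so `χ` is additive for the cut; by
induction, `χ(C)` is the sum of `χ` over the pieces cut out by any finite family of hyperplanes.

Apply this in `V*` to the open star `S` of `A∨`, which is the union of the faces `B∨ ≥ A∨`, and to
its part `S ∩ N` in the half-space `N = {f | f x < 0}`. A face `B∨` meets `N` exactly when
`x ∉ U(B∨)`, and then `B∨ ∩ N` has the dimension of `B∨`; hence
`χ(B∨) - χ(B∨ ∩ N) = (-1) ^ dim B∨ · 1_{U(B∨)}(x)`. In the same way
`χ(S) - χ(S ∩ N) = (-1) ^ n · 1_{V(A∨)}(x)`, because the chambers above `A∨` are dense in `S`. -/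

open Module Set Filter Topology

section IsOpenInSpan

variable {E : Type*} [AddCommGroup E] [Module ℝ E] {C D : Set E} {x p : E}

/-- `C` is relatively open in its linear span: from each of its points one can move a little in
every direction of the span. Stating this along lines makes a topology on `E` unnecessary. -/
def IsOpenInSpan (C : Set E) : Prop :=
  ∀ x ∈ C, ∀ p ∈ Submodule.span ℝ C, ∀ᶠ t in 𝓝 (0 : ℝ), x + t • p ∈ C

theorem isOpenInSpan_univ : IsOpenInSpan (univ : Set E) :=
  fun _ _ _ _ ↦ Eventually.of_forall fun _ ↦ mem_univ _

theorem IsOpenInSpan.inter (hC : IsOpenInSpan C) (hD : IsOpenInSpan D) : IsOpenInSpan (C ∩ D) :=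
  fun x hx p hp ↦
    (hC x hx.1 p (Submodule.span_mono inter_subset_left hp)).and
      (hD x hx.2 p (Submodule.span_mono inter_subset_right hp))

theorem IsOpenInSpan.iInter {κ : Sort*} [Finite κ] {C : κ → Set E} (hC : ∀ k, IsOpenInSpan (C k)) :
    IsOpenInSpan (⋂ k, C k) := by
  intro x hx p hp
  simp only [mem_iInter] at hx ⊢
  exact eventually_all.2 fun k ↦ hC k x (hx k) p (Submodule.span_mono (iInter_subset C k) hp)

theorem mem_span_of_eventually_add_smul_mem (hx : x ∈ C)
    (h : ∀ᶠ t in 𝓝 (0 : ℝ), x + t • p ∈ C) : p ∈ Submodule.span ℝ C := by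
  obtain ⟨t, ht, ht0⟩ :=
    ((h.filter_mono (nhdsWithin_le_nhds (s := {0}ᶜ))).and self_mem_nhdsWithin).exists
  rw [← Submodule.smul_mem_iff _ ht0, ← add_sub_cancel_left x (t • p)]
  exact sub_mem (Submodule.subset_span ht) (Submodule.subset_span hx)

theorem IsOpenInSpan.span_inter_of_eventually (hC : IsOpenInSpan C) (hxC : x ∈ C) (hxD : x ∈ D)
    (hD : ∀ p, ∀ᶠ t in 𝓝 (0 : ℝ), x + t • p ∈ D) :
    Submodule.span ℝ (C ∩ D) = Submodule.span ℝ C :=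
  le_antisymm (Submodule.span_mono inter_subset_left) fun p hp ↦
    mem_span_of_eventually_add_smul_mem ⟨hxC, hxD⟩ ((hC x hxC p hp).and (hD p))

theorem eventually_sign_add_smul_eq {ℓ : Dual ℝ E} (hx : ℓ x ≠ 0) (p : E) :
    ∀ᶠ t in 𝓝 (0 : ℝ), SignType.sign (ℓ (x + t • p)) = SignType.sign (ℓ x) := by
  have hcont : ContinuousAt (fun t : ℝ ↦ ℓ x + t * ℓ p) 0 := by fun_prop
  have hsign : ContinuousAt SignType.sign (ℓ x + 0 * ℓ p) :=
    continuousAt_sign_of_ne_zero (by simpa using hx)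
  simpa using (hsign.comp_of_eq hcont rfl).eventually (p := (· = SignType.sign (ℓ x)))
    (by simp)

theorem isOpenInSpan_setOf_sign_eq (ℓ : Dual ℝ E) (s : SignType) :
    IsOpenInSpan {x | SignType.sign (ℓ x) = s} := by
  rintro x rfl p hp
  obtain hx | hx := eq_or_ne (ℓ x) 0
  · have hker : Submodule.span ℝ {y | SignType.sign (ℓ y) = SignType.sign (ℓ x)} ≤
        LinearMap.ker ℓ := Submodule.span_le.2 fun y hy ↦ by simpa [hx] using hy
    have hp0 : ℓ p = 0 := hker hp
    simp [hp0]
  · exact eventually_sign_add_smul_eq hx p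

theorem convex_setOf_sign_eq (ℓ : Dual ℝ E) (s : SignType) :
    Convex ℝ {x | SignType.sign (ℓ x) = s} := by
  obtain rfl | rfl | rfl := s.trichotomy
  · simpa only [sign_eq_neg_one_iff] using convex_halfSpace_lt ℓ.isLinear 0
  · simpa only [sign_eq_zero_iff] using convex_hyperplane ℓ.isLinear 0
  · simpa only [sign_eq_one_iff] using convex_halfSpace_gt ℓ.isLinear 0

theorem IsOpenInSpan.span_inter_setOf_sign_eq (hC : IsOpenInSpan C) {ℓ : Dual ℝ E} {s : SignType}
    (hs : s ≠ 0) (hne : (C ∩ {x | SignType.sign (ℓ x) = s}).Nonempty) :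
    Submodule.span ℝ (C ∩ {x | SignType.sign (ℓ x) = s}) = Submodule.span ℝ C := by
  obtain ⟨x, hxC, rfl⟩ := hne
  exact hC.span_inter_of_eventually hxC rfl (eventually_sign_add_smul_eq (sign_ne_zero.1 hs))

theorem IsOpenInSpan.span_inter_setOf_sign_eq_zero (hC : IsOpenInSpan C) {ℓ : Dual ℝ E}
    (hne : (C ∩ {x | SignType.sign (ℓ x) = 0}).Nonempty) :
    Submodule.span ℝ (C ∩ {x | SignType.sign (ℓ x) = 0}) =
      Submodule.span ℝ C ⊓ LinearMap.ker ℓ := by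
  simp only [sign_eq_zero_iff] at hne ⊢
  obtain ⟨x, hxC, hx : ℓ x = 0⟩ := hne
  refine le_antisymm (Submodule.span_le.2 fun y hy ↦ ⟨Submodule.subset_span hy.1, hy.2⟩) ?_
  rintro p ⟨hp, hp0 : ℓ p = 0⟩
  refine mem_span_of_eventually_add_smul_mem ⟨hxC, hx⟩ ?_
  filter_upwards [hC x hxC p hp] with t ht
  exact ⟨ht, by simp [hx, hp0]⟩

theorem IsOpenInSpan.exists_sign_eq (hC : IsOpenInSpan C) {ℓ : Dual ℝ E} {y : E} (hx : x ∈ C)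
    (hx0 : ℓ x = 0) (hy : y ∈ C) (hy0 : ℓ y ≠ 0) (s : SignType) :
    ∃ z ∈ C, SignType.sign (ℓ z) = s := by
  have hlim : Tendsto (fun u : ℝ ↦ u * (s * ℓ y)) (𝓝[>] 0) (𝓝 0) :=
    tendsto_nhdsWithin_of_tendsto_nhds (Continuous.tendsto' (by fun_prop) _ _ (zero_mul _))
  obtain ⟨u, hu, hu0⟩ :=
    ((hlim.eventually (hC x hx y (Submodule.subset_span hy))).and self_mem_nhdsWithin).exists
  refine ⟨_, hu, ?_⟩
  have hpos : 0 < u * (ℓ y * ℓ y) := mul_pos hu0 (mul_self_pos.2 hy0)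
  have hval : ℓ (x + (u * (s * ℓ y)) • y) = s * (u * (ℓ y * ℓ y)) := by
    simp only [map_add, map_smul, hx0, smul_eq_mul]
    ring
  rw [hval, sign_mul, sign_pos hpos, mul_one]
  cases s <;> simp

theorem exists_apply_eq_zero_of_sign_ne (hC : Convex ℝ C) {ℓ : Dual ℝ E} {y : E} (hx : x ∈ C)
    (hy : y ∈ C) (hxy : SignType.sign (ℓ x) ≠ SignType.sign (ℓ y)) : ∃ z ∈ C, ℓ z = 0 := by
  have hord : (ℓ '' C).OrdConnected := (hC.linear_image ℓ).ordConnected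
  refine hord.uIcc_subset (mem_image_of_mem ℓ hx) (mem_image_of_mem ℓ hy) (mem_uIcc.2 ?_)
  contrapose! hxy
  obtain h | h := lt_or_ge 0 (ℓ x)
  · rw [sign_pos h, sign_pos (not_le.1 (mt hxy.2 h.not_gt))]
  · have hy0 := hxy.1 h
    rw [sign_neg (hxy.2 hy0.le), sign_neg hy0]

end IsOpenInSpan

section EulerChar

variable {E : Type*} [AddCommGroup E] [Module ℝ E] {C : Set E}

open scoped Classical in
/-- The combinatorial Euler characteristic `(-1) ^ dim C`, meant for convex sets `C` that are open
in their linear span; the dimension is that of the linear span, and the empty set has value `0`. -/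
noncomputable def eulerChar (C : Set E) : ℤ :=
  if C.Nonempty then (-1) ^ finrank ℝ (Submodule.span ℝ C) else 0

@[simp]
theorem eulerChar_empty : eulerChar (∅ : Set E) = 0 :=
  if_neg Set.not_nonempty_empty

theorem eulerChar_of_nonempty (hC : C.Nonempty) :
    eulerChar C = (-1) ^ finrank ℝ (Submodule.span ℝ C) :=
  if_pos hC

theorem finrank_inf_ker_add_one [FiniteDimensional ℝ E] {P : Submodule ℝ E} {ℓ : Dual ℝ E}
    (h : ¬ P ≤ LinearMap.ker ℓ) :
    finrank ℝ (P ⊓ LinearMap.ker ℓ : Submodule ℝ E) + 1 = finrank ℝ P := by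
  have hℓ : ℓ.domRestrict P ≠ 0 := fun h0 ↦
    h fun p hp ↦ LinearMap.mem_ker.2 (DFunLike.congr_fun h0 ⟨p, hp⟩)
  have hker : LinearMap.ker (ℓ.domRestrict P) = (LinearMap.ker ℓ).comap P.subtype := rfl
  rw [← Dual.finrank_ker_add_one_of_ne_zero hℓ, hker, ← Submodule.map_comap_subtype,
    LinearEquiv.finrank_eq (Submodule.equivSubtypeMap P _)]

theorem eulerChar_eq_sum_sign [FiniteDimensional ℝ E] (hC : IsOpenInSpan C) (hconv : Convex ℝ C)
    (ℓ : Dual ℝ E) :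
    eulerChar C = ∑ s : SignType, eulerChar (C ∩ {x | SignType.sign (ℓ x) = s}) := by
  by_cases hconst : ∃ s, ∀ x ∈ C, SignType.sign (ℓ x) = s
  · obtain ⟨s, hs⟩ := hconst
    rw [Fintype.sum_eq_single s, inter_eq_left.2 (show C ⊆ {x | _} from hs)]
    intro t hts
    have hempty : C ∩ {x | SignType.sign (ℓ x) = t} = ∅ :=
      eq_empty_of_forall_notMem fun x hx ↦ hts (hx.2.symm.trans (hs x hx.1))
    rw [hempty, eulerChar_empty]
  · push Not at hconst
    obtain ⟨y, hy, hy0⟩ := hconst 0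
    obtain ⟨z, hz, hzy⟩ := hconst (SignType.sign (ℓ y))
    obtain ⟨x, hx, hx0⟩ := exists_apply_eq_zero_of_sign_ne hconv hz hy hzy
    have hne (s : SignType) : (C ∩ {x | SignType.sign (ℓ x) = s}).Nonempty :=
      hC.exists_sign_eq hx hx0 hy (sign_ne_zero.1 hy0) s
    have hker : ¬ Submodule.span ℝ C ≤ LinearMap.ker ℓ :=
      fun h ↦ sign_ne_zero.1 hy0 (h (Submodule.subset_span hy))
    rw [SignType.univ_eq, Finset.sum_insert (by decide), Finset.sum_pair (by decide),
      eulerChar_of_nonempty (hne 0), eulerChar_of_nonempty (hne (-1)),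
      eulerChar_of_nonempty (hne 1), eulerChar_of_nonempty ⟨y, hy⟩,
      hC.span_inter_setOf_sign_eq_zero (hne 0),
      hC.span_inter_setOf_sign_eq (by decide) (hne (-1)),
      hC.span_inter_setOf_sign_eq (by decide) (hne 1), ← finrank_inf_ker_add_one hker]
    ring

theorem eulerChar_sub_eulerChar_inter_neg (hC : IsOpenInSpan C) (hne : C.Nonempty) (φ : Dual ℝ E)
    [Decidable (∀ y ∈ C, 0 ≤ φ y)] :
    eulerChar C - eulerChar (C ∩ {y | SignType.sign (φ y) = -1}) =
      (-1) ^ finrank ℝ (Submodule.span ℝ C) * if ∀ y ∈ C, 0 ≤ φ y then 1 else 0 := by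
  have hneg : (C ∩ {y | SignType.sign (φ y) = -1}).Nonempty ↔ ¬ ∀ y ∈ C, 0 ≤ φ y := by
    simp only [Set.Nonempty, mem_inter_iff, mem_ofPred_eq, sign_eq_neg_one_iff]
    push Not
    rfl
  split_ifs with h
  · rw [not_nonempty_iff_eq_empty.1 (hneg.not_left.2 h), eulerChar_empty,
      eulerChar_of_nonempty hne, sub_zero, mul_one]
  · rw [eulerChar_of_nonempty (hneg.2 h), hC.span_inter_setOf_sign_eq (by decide) (hneg.2 h),
      eulerChar_of_nonempty hne, sub_self, mul_zero]

end EulerChar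

section SignVector

variable {E ι : Type*} [AddCommGroup E] [Module ℝ E] (ℓ : ι → Dual ℝ E) {C D : Set E} {a y : E}

/-- The signs of the functionals `ℓ i` at `x`. The nonempty fibres of `signVector ℓ` are the faces
of the arrangement of the hyperplanes `ℓ i = 0`. -/
noncomputable def signVector (x : E) : ι → SignType :=
  fun i ↦ SignType.sign (ℓ i x)

theorem signVector_preimage_singleton (σ : ι → SignType) :
    signVector ℓ ⁻¹' {σ} = ⋂ i, {x | SignType.sign (ℓ i x) = σ i} := by
  ext x
  simp [signVector, funext_iff]

theorem isOpenInSpan_signVector_preimage [Finite ι] (σ : ι → SignType) :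
    IsOpenInSpan (signVector ℓ ⁻¹' {σ}) := by
  rw [signVector_preimage_singleton]
  exact .iInter fun i ↦ isOpenInSpan_setOf_sign_eq (ℓ i) (σ i)

theorem eulerChar_eq_sum_signVector [FiniteDimensional ℝ E] [Finite ι]
    [hσ : Fintype (ι → SignType)] (hC : IsOpenInSpan C) (hconv : Convex ℝ C) :
    eulerChar C = ∑ σ : ι → SignType, eulerChar (C ∩ signVector ℓ ⁻¹' {σ}) := by
  classical
  induction ι using Finite.induction_empty_option generalizing hσ C with
  | @of_equiv α β e ih =>
    let _ := Fintype.ofEquiv (β → SignType) (e.arrowCongr (Equiv.refl SignType)).symm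
    rw [ih (ℓ ∘ e) hC hconv, ← (e.arrowCongr (Equiv.refl SignType)).sum_comp]
    refine Finset.sum_congr rfl fun σ _ ↦ ?_
    congr 2
    ext x
    simp [signVector, funext_iff, e.forall_congr_left]
  | h_empty => simp [signVector_preimage_singleton]
  | @h_option α _ ih =>
    rw [eulerChar_eq_sum_sign hC hconv (ℓ none),
      ← (Equiv.piOptionEquivProd (β := fun _ ↦ SignType)).symm.sum_comp, Fintype.sum_prod_type]
    refine Finset.sum_congr rfl fun s _ ↦ ?_
    rw [ih (fun i ↦ ℓ (some i)) (hC.inter (isOpenInSpan_setOf_sign_eq _ s))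
      (hconv.inter (convex_setOf_sign_eq _ s))]
    refine Finset.sum_congr rfl fun τ _ ↦ ?_
    congr 1
    ext x
    simp [signVector, funext_iff, Option.forall, and_assoc, Equiv.piOptionEquivProd]

/-- The open star of the face of `a`: the union of all faces whose closure contains `a`. -/
def openStar (a : E) : Set E :=
  ⋂ i, ⋂ _ : ℓ i a ≠ 0, {y | SignType.sign (ℓ i y) = SignType.sign (ℓ i a)}

variable {ℓ}

theorem mem_openStar :
    y ∈ openStar ℓ a ↔ ∀ i, ℓ i a ≠ 0 → SignType.sign (ℓ i y) = SignType.sign (ℓ i a) := by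
  simp [openStar]

theorem mem_openStar_self (ℓ : ι → Dual ℝ E) (a : E) : a ∈ openStar ℓ a :=
  mem_openStar.2 fun _ _ ↦ rfl

theorem mem_openStar_congr {z : E} (h : signVector ℓ y = signVector ℓ z) :
    y ∈ openStar ℓ a ↔ z ∈ openStar ℓ a := by
  have hi (i : ι) : SignType.sign (ℓ i y) = SignType.sign (ℓ i z) := congrFun h i
  simp only [mem_openStar, hi]

theorem signVector_preimage_eq_openStar (hy : ∀ i, ℓ i y ≠ 0) :
    signVector ℓ ⁻¹' {signVector ℓ y} = openStar ℓ y := by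
  ext z
  simp [mem_openStar, hy, signVector, funext_iff]

variable (ℓ a)

theorem convex_openStar : Convex ℝ (openStar ℓ a) :=
  convex_iInter₂ fun i _ ↦ convex_setOf_sign_eq (ℓ i) _

theorem isOpenInSpan_openStar [Finite ι] : IsOpenInSpan (openStar ℓ a) :=
  .iInter fun i ↦ .iInter fun _ ↦ isOpenInSpan_setOf_sign_eq (ℓ i) _

theorem span_openStar [Finite ι] : Submodule.span ℝ (openStar ℓ a) = ⊤ := by
  refine Submodule.eq_top_iff'.2 fun p ↦
    mem_span_of_eventually_add_smul_mem (mem_openStar_self ℓ a) ?_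
  simp only [mem_openStar]
  refine eventually_all.2 fun i ↦ eventually_imp_distrib_left.2 fun hi ↦ ?_
  exact eventually_sign_add_smul_eq hi p

variable {ℓ a}

theorem sum_eulerChar_inter_of_openStar [FiniteDimensional ℝ E] [Finite ι] {F : Finset (Set E)}
    (hF : ∀ B, B ∈ F ↔ ∃ y ∈ openStar ℓ a, B = signVector ℓ ⁻¹' {signVector ℓ y})
    (hD : IsOpenInSpan D) (hconv : Convex ℝ D) :
    ∑ B ∈ F, eulerChar (B ∩ D) = eulerChar (openStar ℓ a ∩ D) := by
  classical
  have := Fintype.ofFinite (ι → SignType)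
  have hsubset : ∀ B ∈ F, B ⊆ openStar ℓ a := by
    intro B hB z hz
    obtain ⟨y, hy, rfl⟩ := (hF B).1 hB
    exact (mem_openStar_congr hz).2 hy
  have hfibre : F ⊆ Finset.univ.image fun σ ↦ signVector ℓ ⁻¹' {σ} := by
    intro B hB
    obtain ⟨y, -, rfl⟩ := (hF B).1 hB
    exact Finset.mem_image_of_mem _ (Finset.mem_univ _)
  calc ∑ B ∈ F, eulerChar (B ∩ D)
      = ∑ B ∈ F, eulerChar (openStar ℓ a ∩ D ∩ B) := by
        refine Finset.sum_congr rfl fun B hB ↦ ?_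
        rw [inter_comm (openStar ℓ a ∩ D), ← inter_assoc, inter_eq_left.2 (hsubset B hB)]
    _ = ∑ B ∈ Finset.univ.image fun σ ↦ signVector ℓ ⁻¹' {σ},
          eulerChar (openStar ℓ a ∩ D ∩ B) := by
        refine Finset.sum_subset hfibre fun B hB hBF ↦ ?_
        obtain ⟨σ, -, rfl⟩ := Finset.mem_image.1 hB
        have hempty : openStar ℓ a ∩ D ∩ signVector ℓ ⁻¹' {σ} = ∅ := by
          refine eq_empty_of_forall_notMem ?_
          rintro y ⟨⟨hy, -⟩, rfl⟩
          exact hBF ((hF _).2 ⟨y, hy, rfl⟩)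
        rw [hempty, eulerChar_empty]
    _ = ∑ σ, eulerChar (openStar ℓ a ∩ D ∩ signVector ℓ ⁻¹' {σ}) :=
        Finset.sum_image_of_disjoint (g := fun B ↦ eulerChar (openStar ℓ a ∩ D ∩ B)) (by simp)
          (pairwiseDisjoint_fiber _ _)
    _ = eulerChar (openStar ℓ a ∩ D) :=
        (eulerChar_eq_sum_signVector ℓ ((isOpenInSpan_openStar ℓ a).inter hD)
          ((convex_openStar ℓ a).inter hconv)).symm

theorem neg_one_pow_sub {R : Type*} [CommMonoid R] [HasDistribNeg R] {d n : ℕ} (h : d ≤ n) :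
    (-1 : R) ^ (n - d) = (-1) ^ n * (-1) ^ d := by
  obtain ⟨k, rfl⟩ := Nat.exists_eq_add_of_le h
  rw [Nat.add_sub_cancel_left, pow_add, mul_right_comm, ← mul_pow]
  simp

open scoped Classical in
theorem ite_forall_openStar_nonneg_eq_sum [FiniteDimensional ℝ E] [Finite ι] {F : Finset (Set E)}
    (hF : ∀ B, B ∈ F ↔ ∃ y ∈ openStar ℓ a, B = signVector ℓ ⁻¹' {signVector ℓ y})
    (φ : Dual ℝ E) :
    (if ∀ y ∈ openStar ℓ a, 0 ≤ φ y then 1 else 0 : ℤ) =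
      ∑ B ∈ F, (-1) ^ (finrank ℝ E - finrank ℝ (Submodule.span ℝ B)) *
        if ∀ y ∈ B, 0 ≤ φ y then 1 else 0 := by
  set N : Set E := {y | SignType.sign (φ y) = -1}
  have hface : ∀ B ∈ F, (-1 : ℤ) ^ finrank ℝ (Submodule.span ℝ B) *
      (if ∀ y ∈ B, 0 ≤ φ y then 1 else 0) = eulerChar B - eulerChar (B ∩ N) := by
    intro B hB
    obtain ⟨y, -, rfl⟩ := (hF B).1 hB
    exact (eulerChar_sub_eulerChar_inter_neg (isOpenInSpan_signVector_preimage ℓ _) ⟨y, rfl⟩ φ).symm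
  have hstar : eulerChar (openStar ℓ a) - eulerChar (openStar ℓ a ∩ N) =
      (-1) ^ finrank ℝ E * if ∀ y ∈ openStar ℓ a, 0 ≤ φ y then 1 else 0 := by
    rw [eulerChar_sub_eulerChar_inter_neg (isOpenInSpan_openStar ℓ a)
      ⟨a, mem_openStar_self ℓ a⟩, span_openStar, finrank_top]
  have hsum : ∑ B ∈ F, eulerChar B = eulerChar (openStar ℓ a) := by
    simpa using sum_eulerChar_inter_of_openStar hF isOpenInSpan_univ convex_univ
  have hsumN : ∑ B ∈ F, eulerChar (B ∩ N) = eulerChar (openStar ℓ a ∩ N) :=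
    sum_eulerChar_inter_of_openStar hF (isOpenInSpan_setOf_sign_eq φ _) (convex_setOf_sign_eq φ _)
  symm
  calc _ = (-1) ^ finrank ℝ E * ∑ B ∈ F, (eulerChar B - eulerChar (B ∩ N)) := by
        rw [Finset.mul_sum]
        refine Finset.sum_congr rfl fun B hB ↦ ?_
        rw [neg_one_pow_sub (Submodule.finrank_le _), mul_assoc, hface B hB]
    _ = (-1) ^ finrank ℝ E * ((-1) ^ finrank ℝ E *
          if ∀ y ∈ openStar ℓ a, 0 ≤ φ y then 1 else 0) := by
        rw [Finset.sum_sub_distrib, hsum, hsumN, hstar]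
    _ = _ := by rw [← mul_assoc, ← mul_pow, neg_one_mul, neg_neg, one_pow, one_mul]

end SignVector

theorem sign_add_mul_eq_sign {r s t : ℝ} (ht : 0 < t)
    (h : r ≠ 0 → SignType.sign s = SignType.sign r) :
    SignType.sign (r + t * s) = SignType.sign s := by
  obtain hr | rfl | hr := lt_trichotomy r 0
  · have hs : s < 0 := by rw [← sign_eq_neg_one_iff, h hr.ne, sign_neg hr]
    rw [sign_neg hs, sign_neg (add_neg hr (mul_neg_of_pos_of_neg ht hs))]
  · rw [zero_add, sign_mul, sign_pos ht, one_mul]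
  · have hs : 0 < s := by rw [← sign_eq_one_iff, h hr.ne', sign_pos hr]
    rw [sign_pos hs, sign_pos (by positivity)]

section Topology

variable {E ι : Type*} [AddCommGroup E] [Module ℝ E] [TopologicalSpace E] {ℓ : ι → Dual ℝ E}
  {a y : E}

theorem isOpen_openStar [Finite ι] (hℓ : ∀ i, Continuous (ℓ i)) (a : E) :
    IsOpen (openStar ℓ a) := by
  refine isOpen_iInter_of_finite fun i ↦ isOpen_iInter_of_finite fun hi ↦ ?_
  rw [isOpen_iff_eventually]
  intro y (hy : SignType.sign (ℓ i y) = _)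
  have hyi : ℓ i y ≠ 0 := by rwa [← sign_ne_zero, hy, sign_ne_zero]
  have hcont : ContinuousAt (fun z ↦ SignType.sign (ℓ i z)) y :=
    (continuousAt_sign_of_ne_zero hyi).comp (hℓ i).continuousAt
  filter_upwards [hcont.eventually (p := (· = SignType.sign (ℓ i y))) (by simp)] with z hz
  exact hz.trans hy

theorem signVector_preimage_subset_closure_iff [ContinuousAdd E] [ContinuousSMul ℝ E] [Finite ι]
    (hℓ : ∀ i, Continuous (ℓ i)) :
    signVector ℓ ⁻¹' {signVector ℓ a} ⊆ closure (signVector ℓ ⁻¹' {signVector ℓ y}) ↔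
      y ∈ openStar ℓ a := by
  constructor
  · intro h
    obtain ⟨z, hza, hzy⟩ := mem_closure_iff.1 (h rfl) _ (isOpen_openStar hℓ a)
      (mem_openStar_self ℓ a)
    exact (mem_openStar_congr hzy).1 hza
  · intro hy z hz
    have hlim : Tendsto (fun t : ℝ ↦ z + t • y) (𝓝[>] 0) (𝓝 z) :=
      tendsto_nhdsWithin_of_tendsto_nhds (Continuous.tendsto' (by fun_prop) _ _ (by simp))
    refine mem_closure_of_tendsto hlim ?_
    filter_upwards [self_mem_nhdsWithin] with t ht
    refine funext fun i ↦ ?_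
    have hzi : SignType.sign (ℓ i z) = SignType.sign (ℓ i a) := congrFun hz i
    simp only [signVector, map_add, map_smul, smul_eq_mul]
    refine sign_add_mul_eq_sign ht fun h ↦ ?_
    rw [hzi]
    exact mem_openStar.1 hy i (by rwa [← sign_ne_zero, ← hzi, sign_ne_zero])

end Topology

section DualArrangement

variable {V : Type*} [NormedAddCommGroup V] [NormedSpace ℝ V] {H : Finset (Submodule ℝ V)}

variable (H) in
/-- The 1-dimensional flats of `H`; they index the hyperplanes of the dual arrangement. -/
abbrev FlatLine : Type _ :=
  {l : Submodule ℝ V // IsFlat H l ∧ finrank ℝ l = 1}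

instance : Finite (FlatLine H) := by
  refine ((H.powerset.finite_toSet.image fun J ↦ J.inf id).subset ?_).to_subtype
  rintro l ⟨⟨J, hJ, rfl⟩, -⟩
  exact ⟨J, Finset.mem_coe.2 (Finset.mem_powerset.2 hJ), rfl⟩

/-- A chosen nonzero vector of a 1-dimensional flat. -/
noncomputable def FlatLine.generator (l : FlatLine H) : V :=
  (finrank_eq_one_iff'.1 l.2.2).choose

theorem FlatLine.generator_mem (l : FlatLine H) : l.generator ∈ l.1 :=
  (finrank_eq_one_iff'.1 l.2.2).choose.2

theorem FlatLine.generator_ne_zero (l : FlatLine H) : l.generator ≠ 0 :=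
  fun h ↦ (finrank_eq_one_iff'.1 l.2.2).choose_spec.1 (Subtype.ext h)

theorem FlatLine.exists_smul_generator_eq (l : FlatLine H) {w : V} (hw : w ∈ l.1) :
    ∃ c : ℝ, c • l.generator = w :=
  let ⟨c, hc⟩ := (finrank_eq_one_iff'.1 l.2.2).choose_spec.2 ⟨w, hw⟩
  ⟨c, congrArg Subtype.val hc⟩

variable (H) in
/-- The linear functionals on the dual space whose kernels are the hyperplanes of the dual
arrangement: evaluations at the generators of the 1-dimensional flats of `H`. -/
noncomputable def dualForm (l : FlatLine H) : Dual ℝ (V →L[ℝ] ℝ) :=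
  (ContinuousLinearMap.apply ℝ ℝ l.generator).toLinearMap

@[simp]
theorem dualForm_apply (l : FlatLine H) (f : V →L[ℝ] ℝ) : dualForm H l f = f l.generator :=
  rfl

theorem continuous_dualForm (l : FlatLine H) : Continuous (dualForm H l) :=
  (ContinuousLinearMap.apply ℝ ℝ l.generator).continuous

theorem mul_pos_or_eq_zero_iff_sign_eq {r s : ℝ} :
    0 < r * s ∨ (r = 0 ∧ s = 0) ↔ SignType.sign r = SignType.sign s := by
  rcases lt_trichotomy r 0 with hr | rfl | hr <;> rcases lt_trichotomy s 0 with hs | rfl | hs <;>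
    simp [*, mul_pos_iff, ne_of_lt, ne_of_gt, not_lt_of_gt]

theorem dualSameFace_iff {f g : V →L[ℝ] ℝ} :
    DualSameFace H f g ↔ g ∈ signVector (dualForm H) ⁻¹' {signVector (dualForm H) f} := by
  simp only [DualSameFace, mul_pos_or_eq_zero_iff_sign_eq, mem_preimage, mem_singleton_iff,
    signVector, funext_iff, dualForm_apply]
  constructor
  · exact fun h l ↦ (h l.1 l.2.1 l.2.2 _ l.generator_mem).symm
  · intro h l hl hl1 w hw
    obtain ⟨c, rfl⟩ := FlatLine.exists_smul_generator_eq ⟨l, hl, hl1⟩ hw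
    simp only [map_smul, smul_eq_mul, sign_mul, h]

theorem setOf_dualSameFace (f : V →L[ℝ] ℝ) :
    {g | DualSameFace H f g} = signVector (dualForm H) ⁻¹' {signVector (dualForm H) f} :=
  Set.ext fun _ ↦ dualSameFace_iff

theorem isDualFace_and_subset_closure_iff {f : V →L[ℝ] ℝ} {B : Set (V →L[ℝ] ℝ)} :
    IsDualFace H B ∧ {g | DualSameFace H f g} ⊆ closure B ↔
      ∃ g ∈ openStar (dualForm H) f,
        B = signVector (dualForm H) ⁻¹' {signVector (dualForm H) g} := by
  simp only [IsDualFace, setOf_dualSameFace]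
  constructor
  · rintro ⟨⟨g, rfl⟩, hcl⟩
    exact ⟨g, (signVector_preimage_subset_closure_iff continuous_dualForm).1 hcl, rfl⟩
  · rintro ⟨g, hg, rfl⟩
    exact ⟨⟨g, rfl⟩, (signVector_preimage_subset_closure_iff continuous_dualForm).2 hg⟩

theorem dense_setOf_forall_dualForm_ne_zero :
    Dense {f : V →L[ℝ] ℝ | ∀ l, dualForm H l f ≠ 0} := by
  rw [Set.ofPred_forall]
  refine dense_iInter_of_isOpen (fun l ↦ isOpen_ne_fun (continuous_dualForm l) continuous_const)
    fun l ↦ ?_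
  obtain ⟨p, hp⟩ := SeparatingDual.exists_ne_zero (R := ℝ) l.generator_ne_zero
  have hne : ContinuousLinearMap.apply ℝ ℝ l.generator ≠ 0 := fun h ↦ hp (DFunLike.congr_fun h p)
  exact (dense_compl_singleton 0).preimage (ContinuousLinearMap.isOpenMap_of_ne_zero _ hne)

theorem smallCone_setOf_dualSameFace (f : V →L[ℝ] ℝ) :
    smallCone H {g | DualSameFace H f g} = {x | ∀ g ∈ openStar (dualForm H) f, 0 ≤ g x} := by
  ext x
  simp only [smallCone, mem_iInter]
  constructor
  · intro hx
    have hclosed : IsClosed {g : V →L[ℝ] ℝ | 0 ≤ g x} :=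
      isClosed_le continuous_const (ContinuousLinearMap.apply ℝ ℝ x).continuous
    refine (dense_setOf_forall_dualForm_ne_zero (H := H).open_subset_closure_inter
      (isOpen_openStar continuous_dualForm f)).trans (closure_minimal ?_ hclosed)
    rintro g ⟨hg, hgen⟩
    have hchamber : IsOpen (signVector (dualForm H) ⁻¹' {signVector (dualForm H) g}) := by
      rw [signVector_preimage_eq_openStar hgen]
      exact isOpen_openStar continuous_dualForm g
    obtain ⟨hface, hcl⟩ := isDualFace_and_subset_closure_iff.2 ⟨g, hg, rfl⟩
    exact hx _ ⟨⟨hface, hchamber⟩, hcl⟩ g rfl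
  · rintro hx B ⟨⟨hface, -⟩, hcl⟩ k hk
    obtain ⟨g, hg, rfl⟩ := isDualFace_and_subset_closure_iff.1 ⟨hface, hcl⟩
    exact hx k ((mem_openStar_congr hk).2 hg)

theorem finrank_continuousDual [FiniteDimensional ℝ V] : finrank ℝ (V →L[ℝ] ℝ) = finrank ℝ V := by
  rw [← LinearMap.toContinuousLinearMap.finrank_eq]
  exact Subspace.dual_finrank_eq

end DualArrangement

theorem statement7_general {V : Type*} [NormedAddCommGroup V] [NormedSpace ℝ V]
    [FiniteDimensional ℝ V] (H : Finset (Submodule ℝ V))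
    (A : Set (V →L[ℝ] ℝ)) (hA : IsDualFace H A)
    (F : Finset (Set (V →L[ℝ] ℝ)))
    (hF : ∀ B : Set (V →L[ℝ] ℝ), B ∈ F ↔ IsDualFace H B ∧ A ⊆ closure B)
    (x : V) :
    Set.indicator (smallCone H A) (fun _ => (1 : ℤ)) x =
      ∑ B ∈ F,
        (-1 : ℤ) ^ (Module.finrank ℝ V - Module.finrank ℝ (Submodule.span ℝ B)) *
          Set.indicator (bigCone B) (fun _ => (1 : ℤ)) x := by
  classical
  obtain ⟨f, rfl⟩ := hA
  have hfaces := fun B ↦ (hF B).trans isDualFace_and_subset_closure_iff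
  rw [smallCone_setOf_dualSameFace, ← finrank_continuousDual]
  exact ite_forall_openStar_nonneg_eq_sum hfaces (ContinuousLinearMap.apply ℝ ℝ x).toLinearMap

/-- inclusion–exclusion for small dual cones: for every dual face `A∨`
and every `x ∈ V`,
`1_{V(A∨)}(x) = Σ_{B∨ ≥ A∨} (−1)^{n − dim B∨} · 1_{U(B∨)}(x)`. -/
theorem statement7 {V : Type*} [NormedAddCommGroup V] [NormedSpace ℝ V]
    [FiniteDimensional ℝ V] (H : Finset (Submodule ℝ V))
    (hHyp : ∀ W ∈ H, ∃ f : V →ₗ[ℝ] ℝ, f ≠ 0 ∧ LinearMap.ker f = W)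
    (hEss : (⋂ W ∈ H, (W : Set V)) = {0})
    (A : Set (V →L[ℝ] ℝ)) (hA : IsDualFace H A)
    (F : Finset (Set (V →L[ℝ] ℝ)))
    (hF : ∀ B : Set (V →L[ℝ] ℝ), B ∈ F ↔ IsDualFace H B ∧ A ⊆ closure B)
    (x : V) :
    Set.indicator (smallCone H A) (fun _ => (1 : ℤ)) x =
      ∑ B ∈ F,
        (-1 : ℤ) ^ (Module.finrank ℝ V - Module.finrank ℝ (Submodule.span ℝ B)) *
          Set.indicator (bigCone B) (fun _ => (1 : ℤ)) x :=
  statement7_general H A hA F hF x
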